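/- (Breakdown at consensus points for r > 1.) Let m > 0 and let r > 1 be real. Let p⁽¹⁾ = φ_{−m} and p⁽²⁾ = φ_m be the unit-variance Gaussian densities with means −m and m, set M_{2,r}(x) = ((1/2)(p⁽¹⁾(x)^r + p⁽²⁾(x)^r))^{1/r} and Z_{2,r} = ∫_ℝ M_{2,r}(x) dx. Then log(M_{2,r}(0)/Z_{2,r}) < (1/2) · (log p⁽¹⁾(0) + log p⁽²⁾(0)). -/

import Mathlib

/-!
At `x = 0` the two densities share a common value `c > 0`, so the power mean there is `c` and the
claim reads `log (c / Z) < log c`, i.e. `Z > 1`. For `r > 1` strict convexity of `t ↦ t ^ r` gives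
that the power mean dominates the arithmetic mean `(φ_{-m} + φ_m) / 2`, strictly wherever the
densities differ (e.g. at `x = m`). The arithmetic mean integrates to `1`, and the power mean is
continuous and integrable (it is at most `φ_{-m} + φ_m`), so `Z > 1`.
-/

open MeasureTheory Real

/-- The density of the one-dimensional Gaussian `N(μ, 1)`. -/
noncomputable def gaussianPdf (μ x : ℝ) : ℝ :=
  (2 * π) ^ (-(1 : ℝ) / 2) * Real.exp (-(x - μ) ^ 2 / 2)

open ProbabilityTheory

lemma gaussianPdf_eq_gaussianPDFReal (μ : ℝ) : gaussianPdf μ = gaussianPDFReal μ 1 := by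
  funext x
  have h : (2 * π) ^ (-(1 : ℝ) / 2) = (√(2 * π))⁻¹ := by
    rw [Real.sqrt_eq_rpow, ← Real.rpow_neg (by positivity)]
    norm_num
  simp [gaussianPdf, gaussianPDFReal, h]

lemma gaussianPdf_pos (μ x : ℝ) : 0 < gaussianPdf μ x := by
  unfold gaussianPdf
  positivity

lemma integrable_gaussianPdf (μ : ℝ) : Integrable (gaussianPdf μ) := by
  rw [gaussianPdf_eq_gaussianPDFReal]
  exact integrable_gaussianPDFReal μ 1

lemma integral_gaussianPdf (μ : ℝ) : ∫ x, gaussianPdf μ x = 1 := by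
  rw [gaussianPdf_eq_gaussianPDFReal]
  exact integral_gaussianPDFReal_eq_one μ one_ne_zero

lemma continuous_gaussianPdf (μ : ℝ) : Continuous (gaussianPdf μ) := by
  unfold gaussianPdf
  fun_prop

lemma powerMean_self {a r : ℝ} (ha : 0 < a) (hr : 1 < r) :
    ((1 / 2) * (a ^ r + a ^ r)) ^ (1 / r) = a := by
  rw [show (1 / 2) * (a ^ r + a ^ r) = a ^ r by ring, one_div,
    Real.rpow_rpow_inv ha.le (by linarith)]

lemma arithMean_lt_powerMean {a b r : ℝ} (ha : 0 < a) (hb : 0 < b) (hr : 1 < r) (hab : a ≠ b) :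
    (a + b) / 2 < ((1 / 2) * (a ^ r + b ^ r)) ^ (1 / r) := by
  have h := (strictConvexOn_rpow hr).2 (Set.mem_Ici.2 ha.le) (Set.mem_Ici.2 hb.le) hab
    (show (0 : ℝ) < 1 / 2 by norm_num) (show (0 : ℝ) < 1 / 2 by norm_num) (by norm_num)
  simp only [smul_eq_mul] at h
  rw [one_div r, Real.lt_rpow_inv_iff_of_pos (by positivity) (by positivity) (by linarith)]
  calc ((a + b) / 2) ^ r = (1 / 2 * a + 1 / 2 * b) ^ r := by ring_nf
    _ < _ := h
    _ = _ := by ring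

lemma powerMean_le_add {a b r : ℝ} (ha : 0 < a) (hb : 0 < b) (hr : 1 < r) :
    ((1 / 2) * (a ^ r + b ^ r)) ^ (1 / r) ≤ a + b := by
  rw [one_div r, Real.rpow_inv_le_iff_of_pos (by positivity) (by positivity) (by linarith)]
  have h1 : a ^ r ≤ (a + b) ^ r := Real.rpow_le_rpow ha.le (by linarith) (by linarith)
  have h2 : b ^ r ≤ (a + b) ^ r := Real.rpow_le_rpow hb.le (by linarith) (by linarith)
  linarith

lemma one_lt_integral_powerMean {m r : ℝ} (hm : 0 < m) (hr : 1 < r) :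
    1 < ∫ x, ((1 / 2) * (gaussianPdf (-m) x ^ r + gaussianPdf m x ^ r)) ^ (1 / r) := by
  set M : ℝ → ℝ :=
    fun x => ((1 / 2) * (gaussianPdf (-m) x ^ r + gaussianPdf m x ^ r)) ^ (1 / r) with hM
  set A : ℝ → ℝ := fun x => (gaussianPdf (-m) x + gaussianPdf m x) / 2 with hA
  have hc1 := continuous_gaussianPdf (-m)
  have hc2 := continuous_gaussianPdf m
  have hr0 : 0 ≤ r := by linarith
  have hMc : Continuous M :=
    (continuous_const.mul ((hc1.rpow_const fun _ => Or.inr hr0).add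
      (hc2.rpow_const fun _ => Or.inr hr0))).rpow_const fun _ => Or.inr (by positivity)
  have hAc : Continuous A := (hc1.add hc2).div_const 2
  have hsum := (integrable_gaussianPdf (-m)).add (integrable_gaussianPdf m)
  have hAi : Integrable A := hsum.div_const 2
  have hMi : Integrable M := by
    refine hsum.mono' hMc.aestronglyMeasurable (ae_of_all _ fun x => ?_)
    have h1 := gaussianPdf_pos (-m) x
    have h2 := gaussianPdf_pos m x
    rw [Real.norm_of_nonneg (by positivity)]
    exact powerMean_le_add h1 h2 hr
  have hAint : ∫ x, A x = 1 := by
    rw [hA, integral_div, integral_add (integrable_gaussianPdf _) (integrable_gaussianPdf _),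
      integral_gaussianPdf, integral_gaussianPdf]
    norm_num
  have hle : ∀ x, A x ≤ M x := fun x => by
    by_cases h : gaussianPdf (-m) x = gaussianPdf m x
    · simp only [hA, hM, h]
      rw [powerMean_self (gaussianPdf_pos m x) hr]
      linarith
    · exact (arithMean_lt_powerMean (gaussianPdf_pos _ _) (gaussianPdf_pos _ _) hr h).le
  have hne : gaussianPdf (-m) m ≠ gaussianPdf m m := by
    refine ne_of_lt (mul_lt_mul_of_pos_left (Real.exp_lt_exp.2 ?_) (by positivity))
    nlinarith
  have hlt : A m < M m := arithMean_lt_powerMean (gaussianPdf_pos _ _) (gaussianPdf_pos _ _) hr hne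
  have hpos : 0 < ∫ x, (M x - A x) :=
    integral_pos_of_integrable_nonneg_nonzero (hMc.sub hAc) (hMi.sub hAi)
      (fun x => sub_nonneg.2 (hle x)) (sub_pos.2 hlt).ne'
  rw [integral_sub hMi hAi, hAint] at hpos
  linarith

/-- Breakdown at consensus points for `r > 1`: for the symmetric unit-variance Gaussians
`φ_{-m}` and `φ_m` (with `m > 0`), the log of the normalized power mean density of order
`r > 1` at `x = 0` is strictly below the average of the individual log-densities there. -/
theorem breakdown_at_consensus_points
    (m r : ℝ) (hm : 0 < m) (hr : 1 < r) :
    Real.log ((((1 / 2) * (gaussianPdf (-m) 0 ^ r + gaussianPdf m 0 ^ r)) ^ (1 / r)) /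
        (∫ x, ((1 / 2) * (gaussianPdf (-m) x ^ r + gaussianPdf m x ^ r)) ^ (1 / r)))
      < (1 / 2) * (Real.log (gaussianPdf (-m) 0) + Real.log (gaussianPdf m 0)) := by
  have hZ := one_lt_integral_powerMean hm hr
  have h0 : gaussianPdf (-m) 0 = gaussianPdf m 0 := by simp [gaussianPdf]
  have hc := gaussianPdf_pos m 0
  rw [h0, powerMean_self hc hr, Real.log_div hc.ne' (by linarith)]
  have := Real.log_pos hZ
  linarith
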